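/- arXiv:1406.3062 — 3 statements merged into one kernel-verified Lean document; each statement's English description precedes it below -/
import Mathlib

section
/- Let I be a σ-ideal on ℝ satisfying the standing assumptions (ℝ ∉ I, translation invariance, scale invariance, Borel base, Steinhaus property). If L ⊆ ℝ is an I-Luzin set, then the Minkowski sum L + ℚ = {l + q : l ∈ L, q ∈ ℚ} is a strong I-Luzin set. -/
open Cardinal MeasureTheory Set
open scoped Pointwise

/-- `I` is a σ-ideal on `ℝ`. -/
def IsSigmaIdeal (I : Set (Set ℝ)) : Prop :=
  ∅ ∈ I ∧ (∀ A B : Set ℝ, A ⊆ B → B ∈ I → A ∈ I) ∧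
    ∀ f : ℕ → Set ℝ, (∀ n, f n ∈ I) → (⋃ n, f n) ∈ I

/-- The standing assumptions on the σ-ideal `I`: nontriviality, translation and scale
invariance, Borel base and the Steinhaus property. -/
def StandingIdeal (I : Set (Set ℝ)) : Prop :=
  IsSigmaIdeal I ∧
  Set.univ ∉ I ∧
  (∀ x : ℝ, ∀ S ∈ I, (fun y => x + y) '' S ∈ I) ∧
  (∀ x : ℝ, ∀ S ∈ I, (fun y => x * y) '' S ∈ I) ∧
  (∀ S ∈ I, ∃ B ∈ I, MeasurableSet B ∧ S ⊆ B) ∧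
  (∀ A B : Set ℝ, MeasurableSet A → MeasurableSet B → A ∉ I → B ∉ I →
    (interior (A - B)).Nonempty)

/-- `L` is an `I`-Luzin set. -/
def IsLuzinFor (I : Set (Set ℝ)) (L : Set ℝ) : Prop :=
  Cardinal.mk L = Cardinal.continuum ∧ ∀ S ∈ I, (L ∩ S).Countable

/-- `L` is a strong `I`-Luzin set. -/
def IsStrongLuzinFor (I : Set (Set ℝ)) (L : Set ℝ) : Prop :=
  IsLuzinFor I L ∧ ∀ B : Set ℝ, MeasurableSet B → B ∉ I → ¬ (L ∩ B).Countable

/-- `L` is a Luzin set. -/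
def IsLuzin (L : Set ℝ) : Prop :=
  Cardinal.mk L = Cardinal.continuum ∧ ∀ M : Set ℝ, IsMeagre M → (L ∩ M).Countable

/-- `L` is a strong Luzin set. -/
def IsStrongLuzin (L : Set ℝ) : Prop :=
  IsLuzin L ∧ ∀ B : Set ℝ, MeasurableSet B → ¬ IsMeagre B → ¬ (L ∩ B).Countable

/-- `S` is a Sierpiński set. -/
def IsSierpinski (S : Set ℝ) : Prop :=
  Cardinal.mk S = Cardinal.continuum ∧ ∀ N : Set ℝ, volume N = 0 → (S ∩ N).Countable

/-- `S` is a strong Sierpiński set. -/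
def IsStrongSierpinski (S : Set ℝ) : Prop :=
  IsSierpinski S ∧ ∀ B : Set ℝ, MeasurableSet B → 0 < volume B → ¬ (S ∩ B).Countable

/-- `X` is a Bernstein set. -/
def IsBernstein (X : Set ℝ) : Prop :=
  ∀ P : Set ℝ, Perfect P → P.Nonempty → (P ∩ X).Nonempty ∧ (P ∩ Xᶜ).Nonempty

/-- `A ⊆ ℝ²` is completely `𝓜`-nonmeasurable. -/
def CompletelyMeagerNonmeasurable (A : Set (ℝ × ℝ)) : Prop :=
  ∀ B : Set (ℝ × ℝ), MeasurableSet B → ¬ IsMeagre B → (A ∩ B).Nonempty ∧ ¬ B ⊆ A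

/-- `A ⊆ ℝ²` is completely `𝓝`-nonmeasurable. -/
def CompletelyNullNonmeasurable (A : Set (ℝ × ℝ)) : Prop :=
  ∀ B : Set (ℝ × ℝ), MeasurableSet B → 0 < volume B → (A ∩ B).Nonempty ∧ ¬ B ⊆ A

/-- `n`-fold Minkowski sum (with `nFoldSum A 0 = {0}`). -/
def nFoldSum (A : Set ℝ) : ℕ → Set ℝ
  | 0 => {0}
  | n + 1 => nFoldSum A n + A

/-!
A dense set `Q` meets every difference set `B - A` with nonempty interior, so the Steinhaus property
puts the complement of the saturation `-Q + B` of a Borel set `B ∉ I` into `I`. A Luzin set `L`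
therefore has only countably many points outside `-Q + B`, while each of the uncountably many others
is moved into `B` by an element of `Q`; when `Q` is countable, `(Q + L) ∩ B` must be uncountable.
-/

section AddGroup

variable {G : Type*} [AddGroup G] {Q L S B : Set G}

theorem mk_add_eq_of_countable_left (hQ : Q.Countable) (hQne : Q.Nonempty) (hL : L.Infinite) :
    #↥(Q + L) = #L := by
  have aleph0_le_mk : ℵ₀ ≤ #L := infinite_iff.1 hL.to_subtype
  apply le_antisymm
  · calc
      #↥(Q + L) ≤ #Q * #L := mk_add_le
      _ ≤ ℵ₀ * #L := by gcongr; exact hQ.le_aleph0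
      _ = #L := aleph0_mul_eq aleph0_le_mk
  · obtain ⟨q, hq⟩ := hQne
    calc
      #L = #↥(q +ᵥ L) := (mk_vadd_set q L).symm
      _ ≤ #↥(Q + L) := mk_le_mk_of_subset (vadd_set_subset_add hq)

theorem countable_add_inter (hQ : Q.Countable) (h : ∀ q ∈ Q, (L ∩ (-q +ᵥ S)).Countable) :
    ((Q + L) ∩ S).Countable := by
  refine (hQ.biUnion fun q hq ↦ (h q hq).image (q + ·)).mono ?_
  rintro _ ⟨⟨q, hq, l, hl, rfl⟩, hS⟩
  exact mem_biUnion hq ⟨l, ⟨hl, q + l, hS, neg_add_cancel_left q l⟩, rfl⟩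

theorem countable_inter_neg_add (hQ : Q.Countable) (h : ((Q + L) ∩ B).Countable) :
    (L ∩ (-Q + B)).Countable := by
  refine (hQ.image2 h (-· + ·)).mono ?_
  rintro _ ⟨hl, p, hp, b, hb, rfl⟩
  have mem_sum : b ∈ Q + L := ⟨-p, hp, p + b, hl, neg_add_cancel_left p b⟩
  exact ⟨-p, hp, b, ⟨mem_sum, hb⟩, by simp only [neg_neg]⟩

theorem measurableSet_add_of_countable_left [MeasurableSpace G] [MeasurableAdd G] (hQ : Q.Countable)
    (hB : MeasurableSet B) : MeasurableSet (Q + B) := by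
  rw [← iUnion_add_left_image]
  exact .biUnion hQ fun q _ ↦ hB.const_vadd q

theorem neg_add_inter_nonempty_of_dense [TopologicalSpace G] {A : Set G} (hQ : Dense Q)
    (h : (interior (B - A)).Nonempty) : ((-Q + B) ∩ A).Nonempty := by
  obtain ⟨q, hq, hqQ⟩ := hQ.inter_open_nonempty _ isOpen_interior h
  obtain ⟨b, hb, a, ha, hba⟩ := interior_subset hq
  exact ⟨a, ⟨-q, neg_mem_neg.2 hqQ, b, hb, by simp [← hba]⟩, ha⟩

/-- The Steinhaus property of a family `I` of small sets: any two measurable sets outside `I` have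
a difference set with nonempty interior. The family is not required to be an ideal. -/
def HasSteinhausProperty [TopologicalSpace G] [MeasurableSpace G] (I : Set (Set G)) : Prop :=
  ∀ A B : Set G, MeasurableSet A → MeasurableSet B → A ∉ I → B ∉ I → (interior (A - B)).Nonempty

variable [TopologicalSpace G] [MeasurableSpace G] [MeasurableAdd G] {I : Set (Set G)}

theorem HasSteinhausProperty.compl_neg_add_mem (hI : HasSteinhausProperty I) (hQ : Q.Countable)
    (hQd : Dense Q) (hB : MeasurableSet B) (hBI : B ∉ I) : (-Q + B)ᶜ ∈ I := by
  by_contra hcompl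
  have hQneg : (-Q).Countable := by simpa only [image_neg_eq_neg] using hQ.image Neg.neg
  have hmeas : MeasurableSet (-Q + B) := measurableSet_add_of_countable_left hQneg hB
  have ⟨_, hmem, hnotMem⟩ :=
    neg_add_inter_nonempty_of_dense hQd (hI B _ hB hmeas.compl hBI hcompl)
  exact hnotMem hmem

theorem HasSteinhausProperty.not_countable_add_inter (hI : HasSteinhausProperty I)
    (hQ : Q.Countable) (hQd : Dense Q) (hL : ¬ L.Countable) (hLI : ∀ S ∈ I, (L ∩ S).Countable)
    (hB : MeasurableSet B) (hBI : B ∉ I) : ¬ ((Q + L) ∩ B).Countable := by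
  intro hcount
  have inside : (L ∩ (-Q + B)).Countable := countable_inter_neg_add hQ hcount
  have outside : (L ∩ (-Q + B)ᶜ).Countable := hLI _ (hI.compl_neg_add_mem hQ hQd hB hBI)
  apply hL
  rw [← inter_union_compl L (-Q + B)]
  exact inside.union outside

theorem stmt_1_general (htrans : ∀ g : G, ∀ S ∈ I, g +ᵥ S ∈ I) (hI : HasSteinhausProperty I)
    (hQ : Q.Countable) (hQd : Dense Q) (hL : ¬ L.Countable) (hLI : ∀ S ∈ I, (L ∩ S).Countable) :
    #↥(Q + L) = #L ∧ (∀ S ∈ I, ((Q + L) ∩ S).Countable) ∧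
      ∀ B : Set G, MeasurableSet B → B ∉ I → ¬ ((Q + L) ∩ B).Countable :=
  ⟨mk_add_eq_of_countable_left hQ hQd.nonempty fun hfin ↦ hL hfin.countable,
    fun S hS ↦ countable_add_inter hQ fun q _ ↦ hLI _ (htrans (-q) S hS),
    fun _ ↦ hI.not_countable_add_inter hQ hQd hL hLI⟩

end AddGroup

theorem IsLuzinFor.not_countable {I : Set (Set ℝ)} {L : Set ℝ} (hL : IsLuzinFor I L) :
    ¬ L.Countable := by
  rw [← le_aleph0_iff_set_countable, hL.1, not_le]
  exact aleph0_lt_continuum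

theorem stmt_1 (I : Set (Set ℝ)) (hI : StandingIdeal I)
    (L : Set ℝ) (hL : IsLuzinFor I L) :
    IsStrongLuzinFor I (L + Set.range ((↑) : ℚ → ℝ)) := by
  obtain ⟨-, -, htrans, -, -, hsteinhaus⟩ := hI
  obtain ⟨hmk, hsmall, hlarge⟩ := stmt_1_general htrans hsteinhaus
    (countable_range ((↑) : ℚ → ℝ)) Rat.denseRange_cast hL.not_countable hL.2
  rw [add_comm]
  exact ⟨⟨hmk.trans hL.1, hsmall⟩, hlarge⟩
end

section
/- Assume CH. Then there exists a set A ⊆ ℝ² such that for every point p ∈ ℝ² and every nonzero vector v ∈ ℝ², the set {t ∈ ℝ : p + t·v ∈ A} is a strong Luzin set, and moreover A is a Hamel basis of ℝ² over ℚ. -/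
open Cardinal MeasureTheory Set
open scoped Pointwise

/-!
Encode a σ-ideal on `ℝ` (here the meagre sets) by the filter `l` of complements of its members, and
call a subset of a real vector space null if its trace on every line belongs to the ideal. Null sets
form a σ-ideal containing the countable sets, and a null set of parameters on one line has null
image in the whole space, because `l` is affinely invariant and two distinct lines share at most one
point. Under CH, enumerate in type `ω₁` all vectors and all images of Borel sets on lines, and build
an increasing chain of countable linearly independent sets. Every vector added at stage `j` avoids
the countably many null sets enumerated before `j`, so each null set of the list meets the union
only in vectors of a countable stage. Since the sets to be avoided and the spans of the countable
stages are null, there is room at stage `j` to meet a prescribed large set on a line, and to write a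
prescribed vector `p` as `a + (p - a)` with both summands new.
-/

open Filter Submodule
open scoped Topology

universe u v

section Cardinality

theorem continuum_eq_aleph_one_of_universe (h : continuum.{u} = ℵ₁) : continuum.{v} = ℵ₁ := by
  apply lift_injective.{u}
  simpa using congrArg lift.{v} h

theorem exists_wellOrder_countable_Iio {J : Type*} (hJ : #J ≤ ℵ₁) :
    ∃ (_ : LinearOrder J) (_ : WellFoundedLT J), ∀ j : J, (Iio j).Countable := by
  obtain ⟨_, _, htype⟩ := exists_ord_eq_type_lt J
  refine ⟨_, ‹_›, fun j => ?_⟩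
  rw [← le_aleph0_iff_set_countable, ← lt_aleph_one_iff]
  exact (mk_Iio_lt j htype).trans_le hJ

theorem mk_measurableSet_le_continuum (X : Type*) [TopologicalSpace X] [SecondCountableTopology X]
    [MeasurableSpace X] [BorelSpace X] : #{B : Set X // MeasurableSet B} ≤ 𝔠 := by
  rw [BorelSpace.measurable_eq (α := X),
    (TopologicalSpace.isBasis_countableBasis X).borel_eq_generateFrom]
  exact MeasurableSpace.cardinal_measurableSet_le_continuum
    ((TopologicalSpace.countable_countableBasis X).le_aleph0.trans aleph0_le_continuum)

end Cardinality

section Chains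

variable {α J : Type*} [LinearOrder J] [WellFoundedLT J]

theorem exists_monotone_of_forall_exists_superset {P : Set α → Prop}
    {R : J → Set α → Set α → Prop}
    (hunion : ∀ (j : J) (F : Iio j → Set α), Monotone F → (∀ i, P (F i)) → P (⋃ i, F i))
    (hstep : ∀ j S, P S → ∃ T, S ⊆ T ∧ P T ∧ R j S T) :
    ∃ F : J → Set α, Monotone F ∧ ∀ j, P (F j) ∧ R j (⋃ i : Iio j, F i) (F j) := by
  choose! step hsub hP hR using hstep
  let F : J → Set α := wellFounded_lt.fix fun j G => step j (⋃ i : Iio j, G i i.2)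
  have F_eq (j : J) : F j = step j (⋃ i : Iio j, F i) := wellFounded_lt.fix_eq _ j
  have subset_of_lt {i j : J} (hj : P (⋃ i : Iio j, F i)) (hij : i < j) : F i ⊆ F j := by
    rw [F_eq j]
    exact (subset_iUnion (fun i : Iio j => F i) ⟨i, hij⟩).trans (hsub j _ hj)
  have P_union (j : J) : P (⋃ i : Iio j, F i) := by
    induction j using WellFoundedLT.induction with
    | _ j ih =>
      refine hunion j (fun i => F i) (monotone_iff_forall_lt.2 fun i k hik => ?_) fun i => ?_
      · exact subset_of_lt (ih k k.2) hik
      · rw [F_eq]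
        exact hP i _ (ih i i.2)
  refine ⟨F, monotone_iff_forall_lt.2 fun i j => subset_of_lt (P_union j), fun j => ?_⟩
  rw [F_eq j]
  exact ⟨hP j _ (P_union j), hR j _ (P_union j)⟩

theorem iUnion_inter_subset_of_disjoint_diff {F N : J → Set α} (hF : Monotone F)
    (hdisj : ∀ j, Disjoint (F j \ ⋃ i : Iio j, F i) (⋃ i : Iio j, N i)) (i : J) :
    (⋃ j, F j) ∩ N i ⊆ F i := by
  rintro x ⟨hx, hxN⟩
  obtain ⟨j, hxj⟩ := mem_iUnion.1 hx
  induction j using WellFoundedLT.induction with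
  | _ j ih =>
    rcases le_or_gt j i with hji | hij
    · exact hF hji hxj
    · have hxold : x ∈ ⋃ k : Iio j, F k := by
        by_contra hxnew
        exact disjoint_left.1 (hdisj j) ⟨hxj, hxnew⟩ (mem_iUnion.2 ⟨⟨i, hij⟩, hxN⟩)
      obtain ⟨k, hxk⟩ := mem_iUnion.1 hxold
      exact ih k k.2 hxk

end Chains

section SigmaFilters

theorem compl_mem_of_countable {α : Type*} {l : Filter α} [CountableInterFilter l]
    (hl : l ≤ cofinite) {s : Set α} (hs : s.Countable) : sᶜ ∈ l := by
  rw [← biUnion_of_singleton s, compl_iUnion₂]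
  exact (countable_bInter_mem hs).2 fun x _ => le_cofinite_iff_compl_singleton_mem.1 hl x

theorem residual_le_cofinite (X : Type*) [TopologicalSpace X] [T1Space X]
    [∀ x : X, (𝓝[≠] x).NeBot] : residual X ≤ cofinite :=
  le_cofinite_iff_compl_singleton_mem.2 fun x =>
    residual_of_dense_open isOpen_compl_singleton (dense_compl_singleton x)

instance residual_neBot (X : Type*) [TopologicalSpace X] [BaireSpace X] [Nonempty X] :
    (residual X).NeBot :=
  forall_mem_nonempty_iff_neBot.1 fun _ hs => (dense_of_mem_residual hs).nonempty

instance residual_isMeasurablyGenerated (X : Type*) [TopologicalSpace X] [BaireSpace X]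
    [MeasurableSpace X] [BorelSpace X] : (residual X).IsMeasurablyGenerated where
  exists_measurable_subset _ hs := by
    obtain ⟨G, hGs, hG, hGdense⟩ := mem_residual.1 hs
    exact ⟨G, residual_of_dense_Gδ hG hGdense, hG.measurableSet, hGs⟩

theorem tendsto_affine_residual {𝕜 : Type*} [TopologicalSpace 𝕜] [DivisionRing 𝕜]
    [ContinuousAdd 𝕜] [ContinuousMul 𝕜] {c : 𝕜} (hc : c ≠ 0) (d : 𝕜) :
    Tendsto (fun t => d + t * c) (residual 𝕜) (residual 𝕜) :=
  (((Homeomorph.mulRight₀ c hc).trans (Homeomorph.addLeft d)).residual_map_eq).le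

end SigmaFilters

section LinearAlgebra

variable (K : Type*) {V : Type*} [DivisionRing K] [AddCommGroup V] [Module K V]

theorem span_countable_of_countable [Countable K] {S : Set V} (hS : S.Countable) :
    (span K S : Set V).Countable := by
  have : Countable S := hS
  rw [← Subtype.range_coe (s := S), ← Finsupp.range_linearCombination]
  exact countable_range (Finsupp.linearCombination K ((↑) : S → V))

/-- Countable linearly independent sets: the stages of the transfinite construction. -/
def CountableIndep (S : Set V) : Prop :=
  S.Countable ∧ LinearIndepOn K id S

variable {K}

theorem CountableIndep.insert_of_notMem_span {S : Set V} (hS : CountableIndep K S)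
    {x : V} (hx : x ∉ span K S) : CountableIndep K (insert x S) :=
  ⟨hS.1.insert x, hS.2.id_insert hx⟩

theorem CountableIndep.iUnion {ι : Type*} [Countable ι] {F : ι → Set V}
    (hdir : Directed (· ⊆ ·) F) (hF : ∀ i, CountableIndep K (F i)) :
    CountableIndep K (⋃ i, F i) :=
  ⟨countable_iUnion fun i => (hF i).1, linearIndepOn_iUnion_of_directed hdir fun i => (hF i).2⟩

variable [Countable K] {L : Filter V} [CountableInterFilter L] {S X : Set V}

theorem CountableIndep.exists_superset_inter_nonempty (hS : CountableIndep K S)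
    (hL : L ≤ cofinite) (hX : Xᶜ ∈ L) {C : Set V} (hC : ∃ᶠ x in L, x ∈ C) :
    ∃ T, S ⊆ T ∧ CountableIndep K T ∧ Disjoint (T \ S) X ∧ (T ∩ C).Nonempty := by
  have hspan : (span K S : Set V)ᶜ ∈ L :=
    compl_mem_of_countable hL (span_countable_of_countable K hS.1)
  obtain ⟨x, hxC, hxX, hxS⟩ := (hC.and_eventually (inter_mem hX hspan)).exists
  refine ⟨insert x S, subset_insert x S, hS.insert_of_notMem_span hxS, disjoint_left.2 ?_,
    x, mem_insert x S, hxC⟩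
  rintro y ⟨rfl | hy, hyS⟩
  exacts [hxX, absurd hy hyS]

theorem CountableIndep.exists_superset_mem_span [L.NeBot] (hS : CountableIndep K S)
    (hL : L ≤ cofinite) (hX : Xᶜ ∈ L) {p : V} (hp : Tendsto (fun a => p - a) L L) :
    ∃ T, S ⊆ T ∧ CountableIndep K T ∧ Disjoint (T \ S) X ∧ p ∈ span K T := by
  by_cases hpS : p ∈ span K S
  · exact ⟨S, Subset.rfl, hS, by simp, hpS⟩
  have hspan : (span K (insert p S) : Set V)ᶜ ∈ L :=
    compl_mem_of_countable hL (span_countable_of_countable K (hS.1.insert p))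
  obtain ⟨a, ⟨haX, hpaX⟩, ha⟩ := Filter.nonempty_of_mem (inter_mem (inter_mem hX (hp hX)) hspan)
  have haS : a ∉ span K S := fun h => ha (span_mono (subset_insert p S) h)
  have hp_of_mem {M : Submodule K V} (h : p - a ∈ M) (h' : a ∈ M) : p ∈ M := by
    simpa using add_mem h h'
  have hpa : p - a ∉ span K (insert a S) := fun h =>
    ha (mem_span_insert_exchange (hp_of_mem h (subset_span (mem_insert a S))) hpS)
  refine ⟨insert (p - a) (insert a S), (subset_insert _ _).trans (subset_insert _ _),
    (hS.insert_of_notMem_span haS).insert_of_notMem_span hpa, disjoint_left.2 ?_,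
    hp_of_mem (subset_span (by simp)) (subset_span (by simp))⟩
  rintro x ⟨rfl | rfl | hx, hxS⟩
  exacts [hpaX, haX, absurd hx hxS]

end LinearAlgebra

section Construction

variable {K : Type*} {V : Type u} [DivisionRing K] [AddCommGroup V] [Module K V]
  {L : Filter V} [CountableInterFilter L]

theorem exists_linearIndepOn_of_forall_exists_superset {J : Type*} (hJ : #J ≤ ℵ₁)
    {N : J → Set V} {Q : J → Set V → Prop} (hN : ∀ j, (N j)ᶜ ∈ L)
    (hstep : ∀ j S X, CountableIndep K S → Xᶜ ∈ L →
      ∃ T, S ⊆ T ∧ CountableIndep K T ∧ Disjoint (T \ S) X ∧ Q j T) :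
    ∃ A : Set V, LinearIndepOn K id A ∧ ∀ j, (A ∩ N j).Countable ∧ ∃ T ⊆ A, Q j T := by
  obtain ⟨_, _, hIio⟩ := exists_wellOrder_countable_Iio hJ
  have : ∀ j : J, Countable (Iio j) := hIio
  have hpast (j : J) : (⋃ i : Iio j, N i)ᶜ ∈ L := by
    rw [compl_iUnion, countable_iInter_mem]
    exact fun i => hN i
  obtain ⟨F, hmono, hF⟩ := exists_monotone_of_forall_exists_superset
    (fun j F hF => CountableIndep.iUnion hF.directed_le)
    (fun j S hS => hstep j S (⋃ i : Iio j, N i) hS (hpast j))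
  refine ⟨⋃ j, F j, linearIndepOn_iUnion_of_directed hmono.directed_le fun j => (hF j).1.2,
    fun j => ⟨(hF j).1.1.mono ?_, F j, subset_iUnion F j, (hF j).2.2⟩⟩
  exact iUnion_inter_subset_of_disjoint_diff hmono (fun j => (hF j).2.1) j

theorem exists_basis_inter_countable_inter_nonempty [Countable K] [L.NeBot] (hL : L ≤ cofinite)
    (hsub : ∀ p, Tendsto (fun a => p - a) L L) {𝒩 𝒞 : Set (Set V)}
    (hV : #V ≤ ℵ₁) (h𝒩 : #𝒩 ≤ ℵ₁) (h𝒞 : #𝒞 ≤ ℵ₁)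
    (hnull : ∀ N ∈ 𝒩, Nᶜ ∈ L) (hlarge : ∀ C ∈ 𝒞, ∃ᶠ x in L, x ∈ C) :
    ∃ A : Set V, (∀ N ∈ 𝒩, (A ∩ N).Countable) ∧ (∀ C ∈ 𝒞, (A ∩ C).Nonempty) ∧
      LinearIndepOn K id A ∧ span K A = ⊤ := by
  let N : V ⊕ 𝒩 ⊕ 𝒞 → Set V := Sum.elim (fun _ => ∅) (Sum.elim (↑) fun _ => ∅)
  let Q : V ⊕ 𝒩 ⊕ 𝒞 → Set V → Prop := Sum.elim (fun p T => p ∈ span K T)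
    (Sum.elim (fun _ _ => True) fun C T => (T ∩ C).Nonempty)
  have hJ : #(V ⊕ 𝒩 ⊕ 𝒞) ≤ ℵ₁ := by
    simp only [mk_sum, lift_id]
    exact add_le_of_le (aleph0_le_aleph 1) hV (add_le_of_le (aleph0_le_aleph 1) h𝒩 h𝒞)
  have hN : ∀ j, (N j)ᶜ ∈ L := by
    rintro (p | N | C)
    exacts [by simp [N], hnull N N.2, by simp [N]]
  have hstep : ∀ j S X, CountableIndep K S → Xᶜ ∈ L →
      ∃ T, S ⊆ T ∧ CountableIndep K T ∧ Disjoint (T \ S) X ∧ Q j T := by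
    rintro (p | N | C) S X hS hX
    · exact hS.exists_superset_mem_span hL hX (hsub p)
    · exact ⟨S, Subset.rfl, hS, by simp, trivial⟩
    · exact hS.exists_superset_inter_nonempty hL hX (hlarge C C.2)
  obtain ⟨A, hindep, hA⟩ := exists_linearIndepOn_of_forall_exists_superset hJ hN hstep
  refine ⟨A, fun N hN => (hA (.inr (.inl ⟨N, hN⟩))).1, fun C hC => ?_, hindep,
    eq_top_iff.2 fun p _ => ?_⟩
  · obtain ⟨T, hTA, hTC⟩ := (hA (.inr (.inr ⟨C, hC⟩))).2
    exact hTC.mono (inter_subset_inter_left C hTA)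
  · obtain ⟨T, hTA, hpT⟩ := (hA (.inl p)).2
    exact span_mono hTA hpT

end Construction

section LineFilter

variable {𝕜 V : Type*} [Field 𝕜] [AddCommGroup V] [Module 𝕜 V] {l : Filter 𝕜}

theorem injective_add_smul (p : V) {v : V} (hv : v ≠ 0) :
    Function.Injective fun t : 𝕜 => p + t • v :=
  (add_right_injective p).comp (smul_left_injective 𝕜 hv)

variable (V) in
/-- The filter of sets whose trace on every line belongs to `l`. For `l = residual ℝ` the
complements of its members are the sets that are meagre along every line. -/
def lineFilter (l : Filter 𝕜) : Filter V :=
  ⨆ (p : V) (v : V) (_ : v ≠ 0), map (fun t : 𝕜 => p + t • v) l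

theorem mem_lineFilter {s : Set V} :
    s ∈ lineFilter V l ↔ ∀ p v : V, v ≠ 0 → (fun t : 𝕜 => p + t • v) ⁻¹' s ∈ l := by
  simp only [lineFilter, mem_iSup, mem_map]

theorem tendsto_add_smul_lineFilter (p : V) {v : V} (hv : v ≠ 0) :
    Tendsto (fun t : 𝕜 => p + t • v) l (lineFilter V l) :=
  fun _ hs => mem_lineFilter.1 hs p v hv

instance lineFilter_countableInterFilter [CountableInterFilter l] :
    CountableInterFilter (lineFilter V l) where
  countable_sInter_mem S hS hmem := mem_lineFilter.2 fun p v hv => by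
    rw [preimage_sInter, countable_bInter_mem hS]
    exact fun s hs => mem_lineFilter.1 (hmem s hs) p v hv

instance lineFilter_neBot [Nontrivial V] [l.NeBot] : (lineFilter V l).NeBot :=
  let ⟨_, hv⟩ := exists_ne (0 : V)
  (tendsto_add_smul_lineFilter 0 hv).neBot

theorem lineFilter_le_cofinite (hl : l ≤ cofinite) : lineFilter V l ≤ cofinite :=
  iSup_le fun p => iSup₂_le fun _ hv =>
    (map_mono hl).trans (injective_add_smul p hv).tendsto_cofinite

theorem tendsto_sub_lineFilter (p : V) :
    Tendsto (fun a => p - a) (lineFilter V l) (lineFilter V l) := fun s hs =>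
  mem_lineFilter.2 fun q v hv => by
    filter_upwards [mem_lineFilter.1 hs (p - q) (-v) (neg_ne_zero.2 hv)] with t ht
    simpa only [mem_preimage, smul_neg, ← sub_eq_add_neg, sub_sub] using ht

theorem exists_eq_smul_and_eq_add_smul_of_mem_range {p q v w : V} {s t : 𝕜} (hst : s ≠ t)
    (hs : q + s • w ∈ range fun r : 𝕜 => p + r • v)
    (ht : q + t • w ∈ range fun r : 𝕜 => p + r • v) :
    ∃ c d : 𝕜, w = c • v ∧ q = p + d • v := by
  obtain ⟨a, ha⟩ := hs
  obtain ⟨b, hb⟩ := ht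
  have hst' : s - t ≠ 0 := sub_ne_zero.2 hst
  have hw : w = ((a - b) / (s - t)) • v := by
    rw [div_eq_inv_mul, mul_smul, eq_inv_smul_iff₀ hst']
    linear_combination (norm := module) hb - ha
  refine ⟨_, a - s * ((a - b) / (s - t)), hw, ?_⟩
  rw [sub_smul, mul_smul, ← hw]
  linear_combination (norm := module) -ha

theorem image_add_smul_compl_mem_lineFilter [CountableInterFilter l] (hl : l ≤ cofinite)
    (haff : ∀ c ≠ 0, ∀ d : 𝕜, Tendsto (fun t => d + t * c) l l) (p : V) {v : V} (hv : v ≠ 0)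
    {M : Set 𝕜} (hM : Mᶜ ∈ l) : ((fun t : 𝕜 => p + t • v) '' M)ᶜ ∈ lineFilter V l := by
  refine mem_lineFilter.2 fun q w hw => ?_
  by_cases hline : ∃ c d : 𝕜, w = c • v ∧ q = p + d • v
  · obtain ⟨c, d, rfl, rfl⟩ := hline
    have hreparam (t : 𝕜) : p + d • v + t • c • v = p + (d + t * c) • v := by module
    filter_upwards [haff c (left_ne_zero_of_smul hw) d hM] with t ht
    rwa [mem_preimage, hreparam, mem_compl_iff, (injective_add_smul p hv).mem_set_image]
  · have hsub : ((fun t : 𝕜 => q + t • w) ⁻¹' ((fun t : 𝕜 => p + t • v) '' M)).Subsingleton := by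
      intro s hs t ht
      by_contra hst
      exact hline (exists_eq_smul_and_eq_add_smul_of_mem_range hst
        (image_subset_range _ M hs) (image_subset_range _ M ht))
    exact compl_mem_of_countable hl hsub.finite.countable

end LineFilter

section StrongLuzin

variable {l : Filter ℝ} [CountableInterFilter l]

theorem isStrongLuzinFor_of_forall_measurableSet [l.NeBot] [l.IsMeasurablyGenerated]
    (hCH : continuum.{0} = ℵ₁) (hl : l ≤ cofinite) {Λ : Set ℝ}
    (hnull : ∀ M, MeasurableSet M → Mᶜ ∈ l → (Λ ∩ M).Countable)
    (hlarge : ∀ B, MeasurableSet B → Bᶜ ∉ l → (Λ ∩ B).Nonempty) :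
    IsStrongLuzinFor {S | Sᶜ ∈ l} Λ := by
  have hstrong : ∀ B, MeasurableSet B → Bᶜ ∉ l → ¬ (Λ ∩ B).Countable := by
    intro B hB hBl hcount
    have hdiff : (B \ (Λ ∩ B))ᶜ ∉ l := fun h => hBl <| by
      filter_upwards [h, compl_mem_of_countable hl hcount] with t ht ht' htB
      exact ht ⟨htB, ht'⟩
    obtain ⟨t, htΛ, htB, ht⟩ := hlarge _ (hB.diff hcount.measurableSet) hdiff
    exact ht ⟨htΛ, htB⟩
  refine ⟨⟨(mk_set_le Λ).trans_eq mk_real |>.antisymm ?_, fun S hS => ?_⟩, hstrong⟩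
  · rw [hCH, ← not_lt, lt_aleph_one_iff, le_aleph0_iff_set_countable]
    have huniv : (univ : Set ℝ)ᶜ ∉ l := by simp
    simpa using hstrong univ MeasurableSet.univ huniv
  · obtain ⟨G, hG, hGmeas, hGS⟩ := IsMeasurablyGenerated.exists_measurable_subset hS
    exact (hnull Gᶜ hGmeas.compl (by rwa [compl_compl])).mono
      (inter_subset_inter_right Λ (subset_compl_comm.1 hGS))

/-- The images in `V` of Borel sets of parameters on some line: the sets enumerated in the
transfinite construction. -/
def borelLinePieces (V : Type*) [AddCommGroup V] [Module ℝ V] : Set (Set V) :=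
  {C | ∃ (p v : V) (B : Set ℝ), v ≠ 0 ∧ MeasurableSet B ∧ (fun t : ℝ => p + t • v) '' B = C}

theorem mk_borelLinePieces_le {V : Type*} [AddCommGroup V] [Module ℝ V] (hV : #V ≤ 𝔠) :
    #(borelLinePieces V) ≤ 𝔠 := by
  let piece : V × V × {B : Set ℝ // MeasurableSet B} → Set V :=
    fun j => (fun t : ℝ => j.1 + t • j.2.1) '' j.2.2
  have hrange : borelLinePieces V ⊆ range piece := by
    rintro _ ⟨p, v, B, _, hB, rfl⟩
    exact ⟨⟨p, v, B, hB⟩, rfl⟩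
  have hBorel : lift #{B : Set ℝ // MeasurableSet B} ≤ 𝔠 :=
    lift_le_continuum.2 (mk_measurableSet_le_continuum ℝ)
  refine ((mk_le_mk_of_subset hrange).trans mk_range_le).trans ?_
  simp only [mk_prod, lift_id, lift_id']
  exact mul_le_of_le aleph0_le_continuum hV (mul_le_of_le aleph0_le_continuum hV hBorel)

theorem stmt_6_general {K : Type*} {V : Type u} [DivisionRing K] [Countable K] [AddCommGroup V]
    [Module K V] [Module ℝ V] [Nontrivial V] [l.NeBot] [l.IsMeasurablyGenerated]
    (hCH : continuum.{v} = ℵ₁) (hl : l ≤ cofinite)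
    (haff : ∀ c ≠ 0, ∀ d : ℝ, Tendsto (fun t => d + t * c) l l) (hV : #V ≤ 𝔠) :
    ∃ A : Set V,
      (∀ p v : V, v ≠ 0 → IsStrongLuzinFor {S | Sᶜ ∈ l} {t : ℝ | p + t • v ∈ A}) ∧
      LinearIndependent K ((↑) : A → V) ∧ span K A = ⊤ := by
  have hCHu : continuum.{u} = ℵ₁ := continuum_eq_aleph_one_of_universe hCH
  have hcard {𝒮 : Set (Set V)} (h𝒮 : 𝒮 ⊆ borelLinePieces V) : #𝒮 ≤ ℵ₁ :=
    hCHu ▸ (mk_le_mk_of_subset h𝒮).trans (mk_borelLinePieces_le hV)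
  obtain ⟨A, hnull, hlarge, hindep, hspan⟩ := exists_basis_inter_countable_inter_nonempty (K := K)
    (L := lineFilter V l) (𝒩 := {C ∈ borelLinePieces V | Cᶜ ∈ lineFilter V l})
    (𝒞 := {C ∈ borelLinePieces V | Cᶜ ∉ lineFilter V l})
    (lineFilter_le_cofinite hl) tendsto_sub_lineFilter (hCHu ▸ hV) (hcard (sep_subset _ _))
    (hcard (sep_subset _ _)) (fun _ h => h.2) (fun _ h => h.2)
  refine ⟨A, fun p v hv => isStrongLuzinFor_of_forall_measurableSet
    (continuum_eq_aleph_one_of_universe hCH) hl (fun M hM hMl => ?_) (fun B hB hBl => ?_),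
    hindep, hspan⟩
  · have hcount : (A ∩ (fun t : ℝ => p + t • v) '' M).Countable :=
      hnull _ ⟨⟨p, v, M, hv, hM, rfl⟩, image_add_smul_compl_mem_lineFilter hl haff p hv hMl⟩
    refine (hcount.preimage (injective_add_smul p hv)).mono ?_
    exact inter_subset_inter_right _ (subset_preimage_image _ M)
  · have hpiece : ((fun t : ℝ => p + t • v) '' B)ᶜ ∉ lineFilter V l := fun h => hBl <| by
      filter_upwards [tendsto_add_smul_lineFilter p hv h] with t ht htB
      exact ht (mem_image_of_mem _ htB)
    obtain ⟨_, hA, t, htB, rfl⟩ := hlarge _ ⟨⟨p, v, B, hv, hB, rfl⟩, hpiece⟩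
    exact ⟨t, hA, htB⟩

end StrongLuzin

theorem stmt_6 (hCH : Cardinal.continuum = Cardinal.aleph 1) :
    ∃ A : Set (ℝ × ℝ),
      (∀ (p v : ℝ × ℝ), v ≠ 0 → IsStrongLuzin {t : ℝ | p + t • v ∈ A}) ∧
      LinearIndependent ℚ ((↑) : A → ℝ × ℝ) ∧
      Submodule.span ℚ A = ⊤ :=
  stmt_6_general hCH (residual_le_cofinite ℝ) (fun _ hc d => tendsto_affine_residual hc d)
    (by simp [mk_real])
end

section
/- Assume CH. Let I be a σ-ideal on ℝ satisfying the standing assumptions (ℝ ∉ I, translation invariance, scale invariance, Borel base, Steinhaus property). Then there exists an I-Luzin set L ⊆ ℝ such that the Minkowski sum L + L is also an I-Luzin set. -/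
open Cardinal MeasureTheory Set
open scoped Pointwise

/-!
Call the complement of a set in the ideal large. The large sets form a filter `F` with the
countable intersection property and, under CH, with a basis `(B j)` indexed by `ω₁`. Choose points
`ℓ i`, `i < ω₁`, recursively so that `ℓ i` differs from all earlier points and both `ℓ i` and
`ℓ i + ℓ k`, `k ≤ i`, lie in `B j` for every `j ≤ i`: these are countably many conditions, each
satisfied by a large set of points. Then `range ℓ \ B j` comes from indices below `j` only, and so
does every pair of summands producing a point of `(range ℓ + range ℓ) \ B j`.
The same recursion of length `κ` works for filters closed under intersections of fewer than `κ`
sets and with a basis of size at most `κ`.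
-/

open Filter Function

universe u

theorem exists_fun_forall_domRestrict_Iio {ι α : Type*} [Preorder ι] [WellFoundedLT ι]
    {P : (i : ι) → (Iio i → α) → α → Prop} (h : ∀ i f, ∃ a, P i f a) :
    ∃ g : ι → α, ∀ i, P i ((Iio i).domRestrict g) (g i) := by
  choose next hnext using h
  let g : ι → α := IsWellFounded.fix (· < ·) fun i prev => next i fun j => prev j j.2
  refine ⟨g, fun i => ?_⟩
  have hg : g i = next i ((Iio i).domRestrict g) := IsWellFounded.fix_eq (· < ·) _ i
  rw [hg]
  exact hnext i _

theorem exists_range_eq_of_mk_le {ι α : Type u} {s : Set α} (hs : s.Nonempty) (h : #s ≤ #ι) :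
    ∃ f : ι → α, range f = s := by
  have := hs.to_subtype
  obtain ⟨e⟩ := h
  exact ⟨Subtype.val ∘ invFun e, by
    rw [(invFun_surjective e.injective).range_comp, Subtype.range_val]⟩

section IndexedSums

variable {ι G : Type*} [LinearOrder ι] {ℓ : ι → G} {B : ι → Set G}

theorem range_sdiff_subset_image_Iio (h : ∀ i, ∀ j ≤ i, ℓ i ∈ B j) (j : ι) :
    range ℓ \ B j ⊆ ℓ '' Iio j := by
  rintro _ ⟨⟨i, rfl⟩, hi⟩
  exact ⟨i, lt_of_not_ge fun hji => hi (h i j hji), rfl⟩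

theorem range_add_range_sdiff_subset [AddCommMagma G]
    (h : ∀ i, ∀ j ≤ i, ∀ k ≤ i, ℓ i + ℓ k ∈ B j) (j : ι) :
    (range ℓ + range ℓ) \ B j ⊆ ℓ '' Iio j + ℓ '' Iio j := by
  have lt_of_notMem {i k : ι} (hki : k ≤ i) (hik : ℓ i + ℓ k ∉ B j) : i < j :=
    lt_of_not_ge fun hji => hik (h i j hji k hki)
  rintro _ ⟨⟨_, ⟨i, rfl⟩, _, ⟨k, rfl⟩, rfl⟩, hik⟩
  have hmax : i < j ∧ k < j := by
    rcases le_total k i with hki | hki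
    · have hij := lt_of_notMem hki hik
      exact ⟨hij, hki.trans_lt hij⟩
    · have hkj := lt_of_notMem hki (add_comm (ℓ i) (ℓ k) ▸ hik)
      exact ⟨hki.trans_lt hkj, hkj⟩
  exact add_mem_add (mem_image_of_mem ℓ hmax.1) (mem_image_of_mem ℓ hmax.2)

end IndexedSums

/-- The notion of a `κ`-Luzin set relative to a filter `F`, whose members are thought of as the
complements of the small sets: `L` has `κ` points, fewer than `κ` of them in any small set. -/
def IsCardLuzin {α : Type u} (κ : Cardinal.{u}) (F : Filter α) (L : Set α) : Prop :=
  #L = κ ∧ ∀ s ∈ F, #(L \ s : Set α) < κ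

theorem IsCardLuzin.of_hasBasis {α : Type u} {ι : Sort*} {κ : Cardinal.{u}} {F : Filter α}
    {p : ι → Prop} {b : ι → Set α} {L : Set α} (hF : F.HasBasis p b) (hL : #L = κ)
    (hlt : ∀ i, p i → #(L \ b i : Set α) < κ) : IsCardLuzin κ F L := by
  refine ⟨hL, fun s hs => ?_⟩
  obtain ⟨i, hi, his⟩ := hF.mem_iff.1 hs
  exact (mk_le_mk_of_subset (sdiff_subset_sdiff_right his)).trans_lt (hlt i hi)

section Construction

variable {G ι : Type u} {κ : Cardinal.{u}} {F : Filter G}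

theorem exists_injective_forall_add_mem [Add G] [LinearOrder ι] [WellFoundedLT ι] [NeBot F]
    [CardinalInterFilter F κ] (hcof : F ≤ cofinite) (hadd : ∀ c, Tendsto (· + c) F F)
    (hdouble : Tendsto (fun z => z + z) F F) (hι : ∀ i : ι, #(Iic i) < κ) {B : ι → Set G}
    (hB : ∀ j, B j ∈ F) :
    ∃ ℓ : ι → G, Injective ℓ ∧ (∀ i, ∀ j ≤ i, ℓ i ∈ B j) ∧
      ∀ i, ∀ j ≤ i, ∀ k ≤ i, ℓ i + ℓ k ∈ B j := by
  have hIio (i : ι) : #(Iio i) < κ := (mk_le_mk_of_subset Iio_subset_Iic_self).trans_lt (hι i)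
  have step (i : ι) (f : Iio i → G) : ∃ z, (∀ k, z ≠ f k) ∧
      ∀ j : Iic i, z ∈ B j ∧ z + z ∈ B j ∧ ∀ k, z + f k ∈ B j := by
    have hne : ∀ᶠ z in F, ∀ k, z ≠ f k :=
      (eventually_cardinal_forall (hIio i)).2 fun k => le_cofinite_iff_eventually_ne.1 hcof (f k)
    have hmem : ∀ᶠ z in F, ∀ j : Iic i, z ∈ B j ∧ z + z ∈ B j ∧ ∀ k, z + f k ∈ B j :=
      (eventually_cardinal_forall (hι i)).2 fun j => .and (hB j) <| .and (hdouble (hB j)) <|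
        (eventually_cardinal_forall (hIio i)).2 fun k => hadd (f k) (hB j)
    exact (hne.and hmem).exists
  obtain ⟨ℓ, hℓ⟩ := exists_fun_forall_domRestrict_Iio step
  refine ⟨ℓ, .of_lt_imp_ne fun k i hki => ((hℓ i).1 ⟨k, hki⟩).symm,
    fun i j hji => ((hℓ i).2 ⟨j, hji⟩).1, fun i j hji k hki => ?_⟩
  obtain ⟨-, hself, hprev⟩ := (hℓ i).2 ⟨j, hji⟩
  rcases hki.eq_or_lt with rfl | hlt
  · exact hself
  · exact hprev ⟨k, hlt⟩

theorem mk_add_self_eq [Add G] [IsRightCancelAdd G] {L : Set G} (hL : ℵ₀ ≤ #L) :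
    #(L + L : Set G) = #L := by
  obtain ⟨c, hc⟩ : L.Nonempty :=
    nonempty_coe_sort.1 <| mk_ne_zero_iff.1 (aleph0_pos.trans_le hL).ne'
  refine le_antisymm (mk_add_le.trans (mul_eq_self hL).le) ?_
  rw [← mk_image_eq (f := (· + c)) (s := L) (add_left_injective c)]
  exact mk_le_mk_of_subset (image_subset_iff.2 fun a ha => add_mem_add ha hc)

theorem stmt_11_general [AddCommMagma G] [IsRightCancelAdd G] (hκ : ℵ₀ ≤ κ) [NeBot F]
    [CardinalInterFilter F κ] (hcof : F ≤ cofinite) (hadd : ∀ c, Tendsto (· + c) F F)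
    (hdouble : Tendsto (fun z => z + z) F F) {𝓑 : Set (Set G)} (h𝓑 : F.HasBasis (· ∈ 𝓑) id)
    (hcard : #𝓑 ≤ κ) :
    ∃ L : Set G, IsCardLuzin κ F L ∧ IsCardLuzin κ F (L + L) := by
  have hIic (i : κ.ord.ToType) : #(Iic i) < κ := by
    simpa using mk_Iic_lt i (by simp) (by simpa using hκ)
  obtain ⟨B, rfl⟩ : ∃ B : κ.ord.ToType → Set G, range B = 𝓑 :=
    exists_range_eq_of_mk_le h𝓑.ex_mem (by rwa [mk_ord_toType])
  obtain ⟨ℓ, hinj, hmem, hadd_mem⟩ := exists_injective_forall_add_mem hcof hadd hdouble hIic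
    fun j => h𝓑.mem_of_mem (mem_range_self j)
  have hL : #(range ℓ) = κ := by rw [mk_range_eq ℓ hinj, mk_ord_toType]
  have hLL : #(range ℓ + range ℓ : Set G) = κ := by rw [mk_add_self_eq (hL.symm ▸ hκ), hL]
  have himage (j : κ.ord.ToType) : #(ℓ '' Iio j) < κ :=
    mk_image_le.trans_lt <| (mk_le_mk_of_subset Iio_subset_Iic_self).trans_lt (hIic j)
  refine ⟨range ℓ, .of_hasBasis h𝓑 hL ?_, .of_hasBasis h𝓑 hLL ?_⟩
  · rintro _ ⟨j, rfl⟩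
    exact (mk_le_mk_of_subset (range_sdiff_subset_image_Iio hmem j)).trans_lt (himage j)
  · rintro _ ⟨j, rfl⟩
    calc #((range ℓ + range ℓ) \ B j : Set G)
        ≤ #(ℓ '' Iio j + ℓ '' Iio j : Set G) :=
          mk_le_mk_of_subset (range_add_range_sdiff_subset hadd_mem j)
      _ ≤ #(ℓ '' Iio j) * #(ℓ '' Iio j) := mk_add_le
      _ < κ := mul_lt_of_lt hκ (himage j) (himage j)

end Construction

theorem mk_measurableSet_le_continuum_s11 {α : Type*} [MeasurableSpace α]
    [MeasurableSpace.CountablyGenerated α] : #{s : Set α | MeasurableSet s} ≤ 𝔠 := by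
  obtain ⟨b, hb, rfl⟩ := MeasurableSpace.CountablyGenerated.isCountablyGenerated (α := α)
  exact MeasurableSpace.cardinal_measurableSet_le_continuum
    (hb.le_aleph0.trans aleph0_le_continuum)

section Ideal

variable {I : Set (Set ℝ)}

/-- The filter of complements of the members of a σ-ideal. -/
def IsSigmaIdeal.dualFilter (hI : IsSigmaIdeal I) : Filter ℝ :=
  .ofCountableUnion I
    (fun T hT hTI => by
      rcases T.eq_empty_or_nonempty with rfl | hne
      · simpa only [sUnion_empty] using hI.1
      · obtain ⟨f, rfl⟩ := hT.exists_eq_range hne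
        rw [sUnion_range]
        exact hI.2.2 f fun n => hTI _ (mem_range_self n))
    fun t ht s hst => hI.2.1 s t hst ht

namespace IsSigmaIdeal

theorem mem_dualFilter (hI : IsSigmaIdeal I) {s : Set ℝ} : s ∈ hI.dualFilter ↔ sᶜ ∈ I :=
  Iff.rfl

instance (hI : IsSigmaIdeal I) : CountableInterFilter hI.dualFilter :=
  countableInter_ofCountableUnion ..

theorem isLuzinFor_of_isCardLuzin (hI : IsSigmaIdeal I) (hCH : 𝔠 = (ℵ₁ : Cardinal.{0}))
    {L : Set ℝ} (hL : IsCardLuzin ℵ₁ hI.dualFilter L) : IsLuzinFor I L := by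
  refine ⟨hL.1.trans hCH.symm, fun S hS => ?_⟩
  have hlt := hL.2 Sᶜ (hI.mem_dualFilter.2 (by rwa [compl_compl]))
  rwa [sdiff_compl, lt_aleph_one_iff, le_aleph0_iff_set_countable] at hlt

end IsSigmaIdeal

namespace StandingIdeal

theorem neBot_dualFilter (hI : StandingIdeal I) : NeBot hI.1.dualFilter := by
  rw [neBot_iff, Ne, ← empty_mem_iff_bot, hI.1.mem_dualFilter, compl_empty]
  exact hI.2.1

theorem singleton_mem (hI : StandingIdeal I) (x : ℝ) : {x} ∈ I := by
  obtain ⟨-, -, htranslate, -, -, hsteinhaus⟩ := hI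
  have hzero : {0} ∈ I := by
    by_contra h
    have hinterior := hsteinhaus {0} {0} (.singleton 0) (.singleton 0) h h
    rw [sub_singleton, image_singleton, sub_self, interior_singleton] at hinterior
    exact Set.not_nonempty_empty hinterior
  simpa only [image_singleton, add_zero] using htranslate x {0} hzero

theorem dualFilter_le_cofinite (hI : StandingIdeal I) : hI.1.dualFilter ≤ cofinite :=
  le_cofinite_iff_compl_singleton_mem.2 fun x =>
    hI.1.mem_dualFilter.2 (by simpa only [compl_compl] using hI.singleton_mem x)

theorem tendsto_add_const_dualFilter (hI : StandingIdeal I) (c : ℝ) :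
    Tendsto (· + c) hI.1.dualFilter hI.1.dualFilter := by
  intro s hs
  have htranslate := hI.2.2.1 (-c) sᶜ hs
  rw [mem_map, hI.1.mem_dualFilter]
  simpa only [image_add_left, neg_neg, preimage_compl, add_comm c] using htranslate

theorem tendsto_add_self_dualFilter (hI : StandingIdeal I) :
    Tendsto (fun z => z + z) hI.1.dualFilter hI.1.dualFilter := by
  intro s hs
  refine hI.1.2.1 _ _ (fun z hz => ?_) (hI.2.2.2.1 2⁻¹ sᶜ hs)
  exact ⟨z + z, hz, by ring⟩

theorem hasBasis_dualFilter (hI : StandingIdeal I) :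
    hI.1.dualFilter.HasBasis (· ∈ {s | MeasurableSet s ∧ sᶜ ∈ I}) id := by
  refine ⟨fun s => ⟨fun hs => ?_, fun ⟨t, ht, hts⟩ => mem_of_superset ht.2 hts⟩⟩
  obtain ⟨B, hBI, hBmeas, hsB⟩ := hI.2.2.2.2.1 sᶜ hs
  exact ⟨Bᶜ, ⟨hBmeas.compl, by rwa [compl_compl]⟩, compl_subset_comm.1 hsB⟩

end StandingIdeal

end Ideal

theorem stmt_11 (hCH : Cardinal.continuum = Cardinal.aleph 1)
    (I : Set (Set ℝ)) (hI : StandingIdeal I) :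
    ∃ L : Set ℝ, IsLuzinFor I L ∧ IsLuzinFor I (L + L) := by
  have hCH₀ : 𝔠 = (ℵ₁ : Cardinal.{0}) := Cardinal.lift_injective (by simpa using hCH)
  have := hI.neBot_dualFilter
  have hcard : #{s | MeasurableSet s ∧ sᶜ ∈ I} ≤ ℵ₁ :=
    hCH₀ ▸ (mk_le_mk_of_subset fun s hs => hs.1).trans mk_measurableSet_le_continuum_s11
  obtain ⟨L, hL, hLL⟩ := stmt_11_general (aleph0_le_aleph 1) hI.dualFilter_le_cofinite
    hI.tendsto_add_const_dualFilter hI.tendsto_add_self_dualFilter hI.hasBasis_dualFilter hcard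
  exact ⟨L, hI.1.isLuzinFor_of_isCardLuzin hCH₀ hL, hI.1.isLuzinFor_of_isCardLuzin hCH₀ hLL⟩
end
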